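/- arXiv:2211.03751 — 2 statements merged into one kernel-verified Lean document; each statement's English description precedes it below -/
import Mathlib

section
/- Let A ∈ ℂ^{p×p} be a nonzero positive semidefinite matrix with relative rank r(A) = rank(A)/p, and for α > 0 let μ₀(α) be the unique solution in (−λ_min⁺(A), ∞) of α = (1/p) Σ_{i: λ_i(A)>0} λ_i(A)²/(λ_i(A)+μ₀)², and λ₀(α) = μ₀(α)(1 − (1/(αp)) Σ_{i: λ_i(A)>0} λ_i(A)/(λ_i(A)+μ₀(α))). Then: on (0, r(A)) the map α ↦ λ₀(α) is strictly increasing with λ₀(α) → −∞ as α ↘ 0 and λ₀(α) → 0 as α ↗ r(A); λ₀(r(A)) = 0; and on (r(A), ∞) the map α ↦ λ₀(α) is strictly decreasing with λ₀(α) → −λ_min⁺(A) as α → ∞. -/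
open Matrix Filter
open scoped ComplexOrder

/-- The smallest positive eigenvalue `λ_min⁺` of a Hermitian matrix. -/
noncomputable def lminp {p : ℕ} {A : Matrix (Fin p) (Fin p) ℂ} (hA : A.IsHermitian) : ℝ :=
  sInf {x : ℝ | 0 < x ∧ ∃ i, hA.eigenvalues i = x}

/-- The spectral sum `Σ_{i : eᵢ > 0} eᵢ / (eᵢ + μ)`; for a positive semidefinite matrix with
eigenvalues `e` and `A + μ I` invertible this equals `tr[A (A + μ I)⁻¹]`. -/
noncomputable def specSum1 {p : ℕ} (e : Fin p → ℝ) (μ : ℝ) : ℝ :=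
  ∑ i, if 0 < e i then e i / (e i + μ) else 0

/-- The spectral sum `Σ_{i : eᵢ > 0} eᵢ² / (eᵢ + μ)²`; for a positive semidefinite matrix with
eigenvalues `e` and `A + μ I` invertible this equals `tr[A² (A + μ I)⁻²]`. -/
noncomputable def specSum2 {p : ℕ} (e : Fin p → ℝ) (μ : ℝ) : ℝ :=
  ∑ i, if 0 < e i then (e i) ^ 2 / (e i + μ) ^ 2 else 0

/-! The sum `Σ μ eᵢ / (eᵢ + μ)` is concave in `μ` to the right of all its poles, so
`λ(α, μ) = μ (1 - (α p)⁻¹ Σ eᵢ / (eᵢ + μ))` is convex there. Its derivative in `μ` vanishes exactly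
at `μ₀(α)`, hence `λ₀(α) = min_μ λ(α, μ)`. For fixed `μ` the level `λ(α, μ)` is affine in `1 / α`,
so `λ₀` is concave, and therefore continuous, as a function of `1 / α`. All other claims come from
comparing `λ₀(α)` with `λ(α, ν)` at a well-chosen fixed `ν`. The two regimes are separated by the
sign of `μ₀(α)`, since `λ(α, ν)` increases with `α` for `ν > 0` and decreases for `ν < 0`. -/

section SpectralSums

open Set

variable {p : ℕ} {e : Fin p → ℝ} {μ ν m : ℝ}

/-- The ray to the right of all poles `-eᵢ`, `eᵢ > 0`, of the spectral sums, the domain of `μ₀`. It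
is stated without the smallest positive entry of `e`, so that it makes sense when there is none. -/
def poleFreeRay (e : Fin p → ℝ) : Set ℝ :=
  {μ | ∀ i, 0 < e i → 0 < e i + μ}

/-- The fraction of positive entries of `e`: the relative rank of a positive semidefinite matrix
with eigenvalues `e`. -/
noncomputable def posFrac (e : Fin p → ℝ) : ℝ :=
  (Finset.card {i | 0 < e i} : ℝ) / p

theorem poleFreeRay_eq_Ioi (hm : IsLeast {x : ℝ | 0 < x ∧ ∃ i, e i = x} m) :
    poleFreeRay e = Ioi (-m) := by
  obtain ⟨⟨hm_pos, j, rfl⟩, hle⟩ := hm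
  ext μ
  refine ⟨fun hμ => neg_lt_iff_pos_add'.2 (hμ j hm_pos), fun hμ i hi => ?_⟩
  exact (neg_lt_iff_pos_add'.1 hμ).trans_le (by gcongr; exact hle ⟨hi, i, rfl⟩)

theorem mem_poleFreeRay_of_nonneg (hμ : 0 ≤ μ) : μ ∈ poleFreeRay e :=
  fun _ hi => add_pos_of_pos_of_nonneg hi hμ

theorem posFrac_pos (he : ∃ i, 0 < e i) : 0 < posFrac e := by
  obtain ⟨i, hi⟩ := he
  have hcard : 0 < Finset.card {i | 0 < e i} := Finset.card_pos.2 ⟨i, by simpa using hi⟩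
  exact div_pos (mod_cast hcard) (mod_cast i.pos)

theorem specSum1_nonneg (hμ : μ ∈ poleFreeRay e) : 0 ≤ specSum1 e μ := by
  refine Finset.sum_nonneg fun i _ => ?_
  split_ifs with hi
  · exact (div_pos hi (hμ i hi)).le
  · exact le_rfl

theorem specSum1_pos (he : ∃ i, 0 < e i) (hμ : μ ∈ poleFreeRay e) : 0 < specSum1 e μ := by
  obtain ⟨j, hj⟩ := he
  refine Finset.sum_pos' (fun i _ => ?_) ⟨j, Finset.mem_univ j, ?_⟩
  · split_ifs with hi
    · exact (div_pos hi (hμ i hi)).le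
    · exact le_rfl
  · rw [if_pos hj]
    exact div_pos hj (hμ j hj)

theorem specSum2_strictAntiOn (he : ∃ i, 0 < e i) :
    StrictAntiOn (specSum2 e) (poleFreeRay e) := by
  intro μ hμ ν _ hμν
  have term_lt (i) (hi : 0 < e i) : e i ^ 2 / (e i + ν) ^ 2 < e i ^ 2 / (e i + μ) ^ 2 := by
    have := hμ i hi
    gcongr
  obtain ⟨j, hj⟩ := he
  refine Finset.sum_lt_sum (fun i _ => ?_) ⟨j, Finset.mem_univ j, ?_⟩
  · split_ifs with hi
    · exact (term_lt i hi).le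
    · exact le_rfl
  · simpa only [if_pos hj] using term_lt j hj

theorem specSum2_zero (e : Fin p → ℝ) : specSum2 e 0 = Finset.card {i | 0 < e i} := by
  rw [Finset.natCast_card_filter]
  refine Finset.sum_congr rfl fun i _ => if_ctx_congr Iff.rfl (fun hi => ?_) fun _ => rfl
  rw [add_zero, div_self (pow_pos hi 2).ne']

theorem specSum2_nonneg (e : Fin p → ℝ) (μ : ℝ) : 0 ≤ specSum2 e μ := by
  refine Finset.sum_nonneg fun i _ => ?_
  split_ifs <;> positivity

theorem mul_div_add_le_tangent {a μ ν : ℝ} (hμ : a + μ ≠ 0) (hν : 0 < a + ν) :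
    ν * (a / (a + ν)) ≤ μ * (a / (a + μ)) + (ν - μ) * (a ^ 2 / (a + μ) ^ 2) := by
  have remainder : μ * (a / (a + μ)) + (ν - μ) * (a ^ 2 / (a + μ) ^ 2) - ν * (a / (a + ν))
      = a ^ 2 * (ν - μ) ^ 2 / ((a + μ) ^ 2 * (a + ν)) := by
    field_simp
    ring
  rw [← sub_nonneg, remainder]
  positivity

theorem mul_specSum1_le_tangent (hμ : μ ∈ poleFreeRay e) (hν : ν ∈ poleFreeRay e) :
    ν * specSum1 e ν ≤ μ * specSum1 e μ + (ν - μ) * specSum2 e μ := by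
  simp only [specSum1, specSum2, Finset.mul_sum, ← Finset.sum_add_distrib]
  refine Finset.sum_le_sum fun i _ => ?_
  split_ifs with hi
  · exact mul_div_add_le_tangent (hμ i hi).ne' (hν i hi)
  · simp

end SpectralSums

section RidgeLevel

open Set Topology

variable {p : ℕ} {e : Fin p → ℝ} {α ν : ℝ}

/-- The level `λ(α, μ)` of which `λ₀(α)` is the value at `μ = μ₀(α)`. -/
noncomputable def ridgeLevel (e : Fin p → ℝ) (α μ : ℝ) : ℝ :=
  μ * (1 - (α * p)⁻¹ * specSum1 e μ)

theorem ridgeLevel_zero (e : Fin p → ℝ) (α : ℝ) : ridgeLevel e α 0 = 0 :=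
  zero_mul _

theorem ridgeLevel_eq_mul_one_sub_inv_mul (e : Fin p → ℝ) (α μ : ℝ) :
    ridgeLevel e α μ = μ * (1 - α⁻¹ * ((p : ℝ)⁻¹ * specSum1 e μ)) := by
  rw [ridgeLevel, mul_inv, mul_assoc α⁻¹]

theorem natCast_inv_mul_specSum1_pos (he : ∃ i, 0 < e i) (hν : ν ∈ poleFreeRay e) :
    0 < (p : ℝ)⁻¹ * specSum1 e ν :=
  have hp : (0 : ℝ) < p := mod_cast he.choose.pos
  mul_pos (inv_pos.2 hp) (specSum1_pos he hν)

theorem one_sub_inv_mul_strictMonoOn {c : ℝ} (hc : 0 < c) :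
    StrictMonoOn (fun α : ℝ => 1 - α⁻¹ * c) (Ioi 0) := by
  intro α (hα : 0 < α) β _ hαβ
  dsimp only
  gcongr

theorem ridgeLevel_strictMonoOn (he : ∃ i, 0 < e i) (hν : 0 < ν) :
    StrictMonoOn (fun α => ridgeLevel e α ν) (Ioi 0) := by
  have hs := natCast_inv_mul_specSum1_pos he (mem_poleFreeRay_of_nonneg hν.le)
  intro α hα β hβ hαβ
  simp only [ridgeLevel_eq_mul_one_sub_inv_mul]
  exact mul_lt_mul_of_pos_left (one_sub_inv_mul_strictMonoOn hs hα hβ hαβ) hν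

theorem ridgeLevel_strictAntiOn (he : ∃ i, 0 < e i) (hν : ν ∈ poleFreeRay e) (hν_neg : ν < 0) :
    StrictAntiOn (fun α => ridgeLevel e α ν) (Ioi 0) := by
  have hs := natCast_inv_mul_specSum1_pos he hν
  intro α hα β hβ hαβ
  simp only [ridgeLevel_eq_mul_one_sub_inv_mul]
  exact mul_lt_mul_of_neg_left (one_sub_inv_mul_strictMonoOn hs hα hβ hαβ) hν_neg

theorem le_ridgeLevel_of_nonpos (hα : 0 ≤ α) (hν : ν ∈ poleFreeRay e) (hν_nonpos : ν ≤ 0) :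
    ν ≤ ridgeLevel e α ν := by
  have hs : 0 ≤ (α * p)⁻¹ * specSum1 e ν := mul_nonneg (by positivity) (specSum1_nonneg hν)
  exact le_mul_of_le_one_right hν_nonpos (sub_le_self 1 hs)

theorem tendsto_ridgeLevel_nhdsGT_zero (he : ∃ i, 0 < e i) (hν : 0 < ν) :
    Tendsto (fun α => ridgeLevel e α ν) (𝓝[>] 0) atBot := by
  have hs := natCast_inv_mul_specSum1_pos he (mem_poleFreeRay_of_nonneg hν.le)
  simp only [ridgeLevel_eq_mul_one_sub_inv_mul, sub_eq_add_neg]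
  exact (tendsto_atBot_add_const_left _ 1 (tendsto_neg_atTop_atBot.comp
    (tendsto_inv_nhdsGT_zero.atTop_mul_const hs))).const_mul_atBot hν

theorem tendsto_ridgeLevel_atTop (e : Fin p → ℝ) (ν : ℝ) :
    Tendsto (fun α => ridgeLevel e α ν) atTop (𝓝 ν) := by
  simp only [ridgeLevel_eq_mul_one_sub_inv_mul]
  simpa only [zero_mul, sub_zero, mul_one] using
    ((tendsto_inv_atTop_zero.mul_const ((p : ℝ)⁻¹ * specSum1 e ν)).const_sub 1).const_mul ν

end RidgeLevel

/-- `μ` is the critical point of the convex function `ridgeLevel e α` on the pole-free ray; the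
second field says that the derivative `1 - (α p)⁻¹ * specSum2 e μ` vanishes. -/
structure IsRidgeCritical {p : ℕ} (e : Fin p → ℝ) (α μ : ℝ) : Prop where
  mem : μ ∈ poleFreeRay e
  eq_inv_mul_specSum2 : α = (p : ℝ)⁻¹ * specSum2 e μ

namespace IsRidgeCritical

variable {p : ℕ} {e : Fin p → ℝ} {α β μ ν : ℝ}

theorem posFrac_zero (e : Fin p → ℝ) : IsRidgeCritical e (posFrac e) 0 where
  mem := mem_poleFreeRay_of_nonneg le_rfl
  eq_inv_mul_specSum2 := by rw [specSum2_zero, posFrac, div_eq_inv_mul]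

theorem specSum2_eq (h : IsRidgeCritical e α μ) : specSum2 e μ = α * p := by
  rcases eq_or_ne p 0 with rfl | hp
  · simp [specSum2]
  · rw [h.eq_inv_mul_specSum2, mul_comm, mul_inv_cancel_left₀ (Nat.cast_ne_zero.2 hp)]

theorem nonneg (h : IsRidgeCritical e α μ) : 0 ≤ α := by
  rw [h.eq_inv_mul_specSum2]
  exact mul_nonneg (by positivity) (specSum2_nonneg e μ)

theorem exists_pos (h : IsRidgeCritical e α μ) (hα : 0 < α) : ∃ i, 0 < e i := by
  by_contra! hle
  have hzero : specSum2 e μ = 0 := Finset.sum_eq_zero fun i _ => if_neg (hle i).not_gt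
  exact hα.ne' (by rw [h.eq_inv_mul_specSum2, hzero, mul_zero])

theorem ridgeLevel_le (h : IsRidgeCritical e α μ) (hα : 0 < α) (hν : ν ∈ poleFreeRay e) :
    ridgeLevel e α μ ≤ ridgeLevel e α ν := by
  have hp : (0 : ℝ) < p := mod_cast (h.exists_pos hα).choose.pos
  have tangent := mul_specSum1_le_tangent h.mem hν
  rw [h.specSum2_eq] at tangent
  calc ridgeLevel e α μ
      = ν - (α * p)⁻¹ * (μ * specSum1 e μ + (ν - μ) * (α * p)) := by
        rw [ridgeLevel]
        field_simp
        ring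
    _ ≤ ν - (α * p)⁻¹ * (ν * specSum1 e ν) := by gcongr
    _ = ridgeLevel e α ν := by rw [ridgeLevel]; ring

theorem strictAnti (hμ : IsRidgeCritical e α μ) (hν : IsRidgeCritical e β ν) (hαβ : α < β) :
    ν < μ := by
  have he := hν.exists_pos (hμ.nonneg.trans_lt hαβ)
  have hp : (0 : ℝ) < p := mod_cast he.choose.pos
  rw [← (specSum2_strictAntiOn he).lt_iff_gt hμ.mem hν.mem, hμ.specSum2_eq, hν.specSum2_eq]
  gcongr

theorem unique (hμ : IsRidgeCritical e α μ) (hν : IsRidgeCritical e α ν) (hα : 0 < α) : μ = ν :=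
  (specSum2_strictAntiOn (hμ.exists_pos hα)).injOn hμ.mem hν.mem
    (hμ.specSum2_eq.trans hν.specSum2_eq.symm)

theorem pos_of_lt_posFrac (h : IsRidgeCritical e α μ) (hlt : α < posFrac e) : 0 < μ :=
  h.strictAnti (posFrac_zero e) hlt

theorem neg_of_posFrac_lt (h : IsRidgeCritical e α μ) (hlt : posFrac e < α) : μ < 0 :=
  (posFrac_zero e).strictAnti h hlt

end IsRidgeCritical

section CriticalLevel

open Set Topology

variable {p : ℕ} {e : Fin p → ℝ} {m : ℝ} {μ₀ lam₀ : ℝ → ℝ}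

/-- `μ₀ α` is the critical point `μ₀(α)` and `lam₀ α` the critical value `λ₀(α)`, for every aspect
ratio `α > 0`; nothing is required of the values at `α ≤ 0`. -/
structure IsCriticalLevel (e : Fin p → ℝ) (μ₀ lam₀ : ℝ → ℝ) : Prop where
  critical {α : ℝ} : 0 < α → IsRidgeCritical e α (μ₀ α)
  eq_ridgeLevel {α : ℝ} : 0 < α → lam₀ α = ridgeLevel e α (μ₀ α)

namespace IsCriticalLevel

theorem exists_pos (h : IsCriticalLevel e μ₀ lam₀) : ∃ i, 0 < e i :=
  (h.critical one_pos).exists_pos one_pos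

theorem le_ridgeLevel (h : IsCriticalLevel e μ₀ lam₀) {α ν : ℝ} (hα : 0 < α)
    (hν : ν ∈ poleFreeRay e) : lam₀ α ≤ ridgeLevel e α ν :=
  (h.eq_ridgeLevel hα).trans_le ((h.critical hα).ridgeLevel_le hα hν)

theorem apply_posFrac (h : IsCriticalLevel e μ₀ lam₀) : lam₀ (posFrac e) = 0 := by
  have hr := posFrac_pos h.exists_pos
  rw [h.eq_ridgeLevel hr, (h.critical hr).unique (.posFrac_zero e) hr, ridgeLevel_zero]

theorem strictMonoOn (h : IsCriticalLevel e μ₀ lam₀) : StrictMonoOn lam₀ (Ioo 0 (posFrac e)) := by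
  rintro α ⟨hα, _⟩ β ⟨hβ, hβr⟩ hαβ
  have hμβ : 0 < μ₀ β := (h.critical hβ).pos_of_lt_posFrac hβr
  calc lam₀ α ≤ ridgeLevel e α (μ₀ β) := h.le_ridgeLevel hα (h.critical hβ).mem
    _ < ridgeLevel e β (μ₀ β) := ridgeLevel_strictMonoOn h.exists_pos hμβ hα hβ hαβ
    _ = lam₀ β := (h.eq_ridgeLevel hβ).symm

theorem strictAntiOn (h : IsCriticalLevel e μ₀ lam₀) : StrictAntiOn lam₀ (Ioi (posFrac e)) := by
  intro α hrα β _ hαβ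
  have hα : 0 < α := (posFrac_pos h.exists_pos).trans hrα
  have hβ : 0 < β := hα.trans hαβ
  have hμα : μ₀ α < 0 := (h.critical hα).neg_of_posFrac_lt hrα
  have hmem := (h.critical hα).mem
  calc lam₀ β ≤ ridgeLevel e β (μ₀ α) := h.le_ridgeLevel hβ hmem
    _ < ridgeLevel e α (μ₀ α) := ridgeLevel_strictAntiOn h.exists_pos hmem hμα hα hβ hαβ
    _ = lam₀ α := (h.eq_ridgeLevel hα).symm

theorem concaveOn_inv (h : IsCriticalLevel e μ₀ lam₀) :
    ConcaveOn ℝ (Ioi 0) fun t => lam₀ t⁻¹ := by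
  refine ⟨convex_Ioi 0, fun s hs u hu a b ha hb hab => ?_⟩
  have hv : 0 < a • s + b • u := convex_Ioi 0 hs hu ha hb hab
  set v := a • s + b • u with hv_def
  have hmem := (h.critical (inv_pos.2 hv)).mem
  calc a • lam₀ s⁻¹ + b • lam₀ u⁻¹
      ≤ a • ridgeLevel e s⁻¹ (μ₀ v⁻¹) + b • ridgeLevel e u⁻¹ (μ₀ v⁻¹) := by
        gcongr
        · exact h.le_ridgeLevel (inv_pos.2 hs) hmem
        · exact h.le_ridgeLevel (inv_pos.2 hu) hmem
    _ = ridgeLevel e v⁻¹ (μ₀ v⁻¹) := by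
        simp only [ridgeLevel_eq_mul_one_sub_inv_mul, inv_inv, smul_eq_mul, hv_def]
        linear_combination μ₀ v⁻¹ * hab
    _ = lam₀ v⁻¹ := (h.eq_ridgeLevel (inv_pos.2 hv)).symm

theorem continuousOn (h : IsCriticalLevel e μ₀ lam₀) : ContinuousOn lam₀ (Ioi 0) := by
  have hinv : ContinuousOn (fun t => lam₀ t⁻¹) (Ioi 0) := h.concaveOn_inv.continuousOn isOpen_Ioi
  have hcont : ContinuousOn (·⁻¹) (Ioi (0 : ℝ)) :=
    continuousOn_inv₀.mono fun _ hα => ne_of_gt (mem_Ioi.1 hα)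
  have hmaps : MapsTo (·⁻¹) (Ioi (0 : ℝ)) (Ioi 0) := fun _ hα => inv_pos.2 (mem_Ioi.1 hα)
  simpa only [Function.comp_def, inv_inv] using hinv.comp hcont hmaps

theorem tendsto_nhdsLT_posFrac (h : IsCriticalLevel e μ₀ lam₀) :
    Tendsto lam₀ (𝓝[<] posFrac e) (𝓝 0) := by
  have hcont : ContinuousAt lam₀ (posFrac e) :=
    h.continuousOn.continuousAt (Ioi_mem_nhds (posFrac_pos h.exists_pos))
  simpa only [h.apply_posFrac] using hcont.tendsto.mono_left nhdsWithin_le_nhds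

theorem tendsto_nhdsGT_zero (h : IsCriticalLevel e μ₀ lam₀) : Tendsto lam₀ (𝓝[>] 0) atBot := by
  refine tendsto_atBot_mono' _ ?_ (tendsto_ridgeLevel_nhdsGT_zero h.exists_pos one_pos)
  filter_upwards [self_mem_nhdsWithin] with α hα
  exact h.le_ridgeLevel hα (mem_poleFreeRay_of_nonneg zero_le_one)

theorem tendsto_atTop (h : IsCriticalLevel e μ₀ lam₀) (hray : poleFreeRay e = Ioi (-m)) :
    Tendsto lam₀ atTop (𝓝 (-m)) := by
  refine tendsto_order.2 ⟨fun a ha => ?_, fun a ha => ?_⟩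
  · filter_upwards [eventually_gt_atTop (posFrac e), eventually_gt_atTop 0] with α hrα hα
    have hcrit := h.critical hα
    calc a < -m := ha
      _ < μ₀ α := (hray ▸ hcrit.mem : μ₀ α ∈ Ioi (-m))
      _ ≤ ridgeLevel e α (μ₀ α) :=
        le_ridgeLevel_of_nonpos hα.le hcrit.mem (hcrit.neg_of_posFrac_lt hrα).le
      _ = lam₀ α := (h.eq_ridgeLevel hα).symm
  · obtain ⟨ν, hmν, hνa⟩ := exists_between ha
    filter_upwards [(tendsto_ridgeLevel_atTop e ν).eventually_lt_const hνa,
      eventually_gt_atTop 0] with α hlt hα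
    exact (h.le_ridgeLevel hα (hray ▸ hmν)).trans_lt hlt

end IsCriticalLevel

end CriticalLevel

section PositiveEigenvalues

variable {𝕜 n : Type*} [RCLike 𝕜] [Fintype n] [DecidableEq n] {A : Matrix n n 𝕜}

theorem exists_eigenvalues_pos (hA : A.PosSemidef) (hA0 : A ≠ 0) : ∃ i, 0 < hA.1.eigenvalues i := by
  by_contra! hle
  refine hA0 (hA.1.eigenvalues_eq_zero_iff.1 ?_)
  exact funext fun i => le_antisymm (hle i) (hA.eigenvalues_nonneg i)

theorem rank_eq_card_eigenvalues_pos (hA : A.PosSemidef) :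
    A.rank = Finset.card {i | 0 < hA.1.eigenvalues i} := by
  simp only [hA.1.rank_eq_card_non_zero_eigs, Fintype.card_subtype,
    (hA.eigenvalues_nonneg _).lt_iff_ne']

theorem isLeast_lminp {p : ℕ} {A : Matrix (Fin p) (Fin p) ℂ} (hA : A.IsHermitian)
    (hpos : ∃ i, 0 < hA.eigenvalues i) :
    IsLeast {x : ℝ | 0 < x ∧ ∃ i, hA.eigenvalues i = x} (lminp hA) := by
  have hfin : {x : ℝ | 0 < x ∧ ∃ i, hA.eigenvalues i = x}.Finite :=
    (Set.finite_range hA.eigenvalues).subset fun _ hx => hx.2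
  obtain ⟨i, hi⟩ := hpos
  exact ⟨Set.Nonempty.csInf_mem ⟨_, hi, i, rfl⟩ hfin, fun _ hx => csInf_le hfin.bddBelow hx⟩

end PositiveEigenvalues

theorem stmt11_general {p : ℕ} (e : Fin p → ℝ) (m : ℝ)
    (hm : IsLeast {x : ℝ | 0 < x ∧ ∃ i, e i = x} m)
    (μ₀ lam₀ : ℝ → ℝ)
    (hμ₀ : ∀ α : ℝ, 0 < α → -m < μ₀ α ∧ α = (p : ℝ)⁻¹ * specSum2 e (μ₀ α))
    (hlam₀ : ∀ α : ℝ, 0 < α → lam₀ α = μ₀ α * (1 - (α * p)⁻¹ * specSum1 e (μ₀ α))) :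
    StrictMonoOn lam₀ (Set.Ioo 0 (posFrac e))
    ∧ Tendsto lam₀ (nhdsWithin 0 (Set.Ioi 0)) atBot
    ∧ Tendsto lam₀ (nhdsWithin (posFrac e) (Set.Iio (posFrac e))) (nhds 0)
    ∧ lam₀ (posFrac e) = 0
    ∧ StrictAntiOn lam₀ (Set.Ioi (posFrac e))
    ∧ Tendsto lam₀ atTop (nhds (-m)) := by
  have hray : poleFreeRay e = Set.Ioi (-m) := poleFreeRay_eq_Ioi hm
  have h : IsCriticalLevel e μ₀ lam₀ :=
    ⟨fun hα => ⟨hray ▸ (hμ₀ _ hα).1, (hμ₀ _ hα).2⟩, fun hα => hlam₀ _ hα⟩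
  exact ⟨h.strictMonoOn, h.tendsto_nhdsGT_zero, h.tendsto_nhdsLT_posFrac, h.apply_posFrac,
    h.strictAntiOn, h.tendsto_atTop hray⟩

/-- Dependence of `λ₀` on the aspect ratio `α` (Remark 5.1): `λ₀` is strictly increasing on
`(0, r(A))` with `λ₀(α) → -∞` as `α ↘ 0` and `λ₀(α) → 0` as `α ↗ r(A)`; `λ₀(r(A)) = 0`; and
`λ₀` is strictly decreasing on `(r(A), ∞)` with `λ₀(α) → -λ_min⁺(A)` as `α → ∞`. -/
theorem stmt11 {p : ℕ} (A : Matrix (Fin p) (Fin p) ℂ)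
    (hA : A.PosSemidef) (hA0 : A ≠ 0)
    (μ₀ lam₀ : ℝ → ℝ)
    (hμ₀ : ∀ α : ℝ, 0 < α → -(lminp hA.1) < μ₀ α ∧
      α = (p : ℝ)⁻¹ * specSum2 hA.1.eigenvalues (μ₀ α))
    (hlam₀ : ∀ α : ℝ, 0 < α →
      lam₀ α = μ₀ α * (1 - (α * p)⁻¹ * specSum1 hA.1.eigenvalues (μ₀ α))) :
    StrictMonoOn lam₀ (Set.Ioo 0 ((A.rank : ℝ) / p))
    ∧ Tendsto lam₀ (nhdsWithin 0 (Set.Ioi 0)) atBot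
    ∧ Tendsto lam₀ (nhdsWithin ((A.rank : ℝ) / p) (Set.Iio ((A.rank : ℝ) / p))) (nhds 0)
    ∧ lam₀ ((A.rank : ℝ) / p) = 0
    ∧ StrictAntiOn lam₀ (Set.Ioi ((A.rank : ℝ) / p))
    ∧ Tendsto lam₀ atTop (nhds (-(lminp hA.1))) := by
  rw [rank_eq_card_eigenvalues_pos hA]
  exact stmt11_general _ _ (isLeast_lminp hA.1 (exists_eigenvalues_pos hA hA0)) μ₀ lam₀ hμ₀ hlam₀
end

section
/- Let A, Ψ ∈ ℂ^{p×p} be positive semidefinite matrices with A nonzero, let q ≥ 1, let μ₀ be the unique solution in (−λ_min⁺(A), ∞) of 1 = (1/q) Σ_{i: λ_i(A)>0} λ_i(A)²/(λ_i(A)+μ₀)², let μ ∈ (μ₀, ∞) with μ ≠ 0, and set λ = μ(1 − (1/q) tr[A(A+μ I_p)⁻¹]). Define μ' = (1/q) tr[μ³ (A + μ I_p)⁻¹ Ψ (A + μ I_p)⁻¹] / (λ + (1/q) tr[μ² A (A + μ I_p)⁻²]). Then the denominator equals μ(1 − (1/q) tr[A²(A+μ I_p)⁻²]) ≠ 0,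 and μ' admits the factorization μ' = (1/q) tr[μ² (A + μ I_p)⁻¹ Ψ (A + μ I_p)⁻¹] · (1 − (1/q) tr[A² (A + μ I_p)⁻²])⁻¹; in particular μ' ≥ 0. -/
open Matrix Filter
open scoped ComplexOrder

/-!
The identity `A (A + μ)⁻¹ = A² (A + μ)⁻² + μ A (A + μ)⁻²` collapses the denominator of `μ'` to
`μ (1 - (1/q) tr[A² (A + μ)⁻²])`, whose factor `μ` cancels against the numerator. In terms of the
eigenvalues, `tr[A² (A + μ)⁻²] = ∑ (eᵢ / (eᵢ + μ))²`, which decreases strictly in `μ` as long as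
`eᵢ + μ > 0` for every nonzero `eᵢ`; it equals `q` at `μ₀`, so it is below `q` at `μ`.
-/

section OrderedField

variable {ι K : Type*} [Field K] [LinearOrder K] [IsStrictOrderedRing K]

lemma sq_div_add_lt_sq_div_add {x s t : K} (hx : x ≠ 0) (hs : 0 < x + s) (hst : s < t) :
    (x / (x + t)) ^ 2 < (x / (x + s)) ^ 2 := by
  simp only [div_pow]
  gcongr

lemma sum_sq_div_add_lt_of_lt [Fintype ι] {e : ι → K} {s t : K}
    (hs : ∀ i, e i ≠ 0 → 0 < e i + s) (he : e ≠ 0) (hst : s < t) :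
    ∑ i, (e i / (e i + t)) ^ 2 < ∑ i, (e i / (e i + s)) ^ 2 := by
  obtain ⟨j, hj⟩ := Function.ne_iff.mp he
  refine Finset.sum_lt_sum (fun i _ ↦ ?_)
    ⟨j, Finset.mem_univ j, sq_div_add_lt_sq_div_add hj (hs j hj) hst⟩
  rcases eq_or_ne (e i) 0 with hi | hi
  · simp [hi]
  · exact (sq_div_add_lt_sq_div_add hi (hs i hi) hst).le

lemma pos_of_one_eq_mul_sum_sq [Fintype ι] {x : ι → K} {c : K}
    (hc : 1 = c * ∑ i, x i ^ 2) : 0 < c :=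
  pos_of_mul_pos_left (hc ▸ one_pos) (Finset.sum_nonneg fun i _ ↦ sq_nonneg (x i))

lemma one_sub_mul_sum_sq_div_add_pos [Fintype ι] {e : ι → K} {c s t : K}
    (hs : ∀ i, e i ≠ 0 → 0 < e i + s) (hc : 1 = c * ∑ i, (e i / (e i + s)) ^ 2)
    (hst : s < t) : 0 < 1 - c * ∑ i, (e i / (e i + t)) ^ 2 := by
  have he : e ≠ 0 := by
    rintro rfl
    simp at hc
  rw [sub_pos, hc]
  exact mul_lt_mul_of_pos_left (sum_sq_div_add_lt_of_lt hs he hst) (pos_of_one_eq_mul_sum_sq hc)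

end OrderedField

section CommRing

variable {R n : Type*} [CommRing R] [Fintype n] [DecidableEq n]

lemma mul_inv_add_smul_one {A : Matrix n n R} {c : R} (h : IsUnit (A + c • 1)) :
    A * (A + c • 1)⁻¹ = A ^ 2 * ((A + c • 1) ^ 2)⁻¹ + c • (A * ((A + c • 1) ^ 2)⁻¹) := by
  have h_expand : A ^ 2 + c • A = A * (A + c • 1) := by
    rw [mul_add, pow_two, mul_smul_comm, mul_one]
  rw [← smul_mul_assoc, ← add_mul, h_expand, pow_two (A + c • 1), Matrix.mul_inv_rev,
    mul_assoc, mul_nonsing_inv_cancel_left _ _ ((isUnit_iff_isUnit_det _).mp h)]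

lemma trace_inv_mul_mul_inv_nonneg [PartialOrder R] [StarRing R] [AddLeftMono R]
    {B Psi : Matrix n n R} (hB : B.IsHermitian) (hPsi : Psi.PosSemidef) :
    0 ≤ (B⁻¹ * Psi * B⁻¹).trace := by
  have h_psd := hPsi.mul_mul_conjTranspose_same B⁻¹
  rw [hB.inv.eq] at h_psd
  exact h_psd.trace_nonneg

end CommRing

section RCLike

variable {𝕜 n : Type*} [RCLike 𝕜] [Fintype n] [DecidableEq n] {A : Matrix n n 𝕜}

lemma mul_one_sub_trace_add_sq_mul_trace {c μ : ℝ} (h : IsUnit (A + (μ : 𝕜) • 1)) :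
    μ * (1 - c * RCLike.re (A * (A + (μ : 𝕜) • 1)⁻¹).trace)
        + c * (μ ^ 2 * RCLike.re (A * ((A + (μ : 𝕜) • 1) ^ 2)⁻¹).trace)
      = μ * (1 - c * RCLike.re (A ^ 2 * ((A + (μ : 𝕜) • 1) ^ 2)⁻¹).trace) := by
  rw [mul_inv_add_smul_one h, trace_add, trace_smul, smul_eq_mul, map_add, RCLike.re_ofReal_mul]
  ring

lemma continuousOn_spectrum (A : Matrix n n 𝕜) (f : ℝ → ℝ) : ContinuousOn f (spectrum ℝ A) :=
  finite_real_spectrum.continuousOn f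

lemma trace_cfc (hA : A.IsHermitian) (f : ℝ → ℝ) :
    (cfc f A).trace = ((∑ i, f (hA.eigenvalues i) : ℝ) : 𝕜) := by
  rw [hA.cfc_eq, IsHermitian.cfc, trace_map, trace_diagonal, RCLike.ofReal_sum]
  rfl

lemma cfc_add_right_eq_add_smul_one (hA : A.IsHermitian) (μ : ℝ) :
    cfc (· + μ) A = A + (μ : 𝕜) • 1 := by
  rw [← RCLike.real_smul_eq_coe_smul (K := 𝕜), ← Algebra.algebraMap_eq_smul_one]
  exact (cfc_add_const μ id A (continuousOn_spectrum A _) hA).trans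
    (congrArg (· + algebraMap ℝ _ μ) (cfc_id ℝ A hA))

lemma isUnit_add_smul_one (hA : A.IsHermitian) {μ : ℝ}
    (hμ : ∀ i, hA.eigenvalues i + μ ≠ 0) : IsUnit (A + (μ : 𝕜) • 1) := by
  rw [← cfc_add_right_eq_add_smul_one hA]
  refine (isUnit_cfc_iff _ A (continuousOn_spectrum A _) hA).mpr ?_
  rw [hA.spectrum_real_eq_range_eigenvalues]
  exact Set.forall_mem_range.mpr hμ

lemma sq_mul_inv_add_smul_one_sq_eq_cfc (hA : A.IsHermitian) {μ : ℝ}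
    (hμ : ∀ i, hA.eigenvalues i + μ ≠ 0) :
    A ^ 2 * ((A + (μ : 𝕜) • 1) ^ 2)⁻¹ = cfc (fun x ↦ (x / (x + μ)) ^ 2) A := by
  have h_unit := (isUnit_iff_isUnit_det _).mp ((isUnit_add_smul_one hA hμ).pow 2)
  have h_mul : cfc (fun x ↦ (x / (x + μ)) ^ 2) A * (A + (μ : 𝕜) • 1) ^ 2 = A ^ 2 := by
    have h_sq : (A + (μ : 𝕜) • 1) ^ 2 = cfc (fun x ↦ (x + μ) ^ 2) A := by
      rw [← cfc_add_right_eq_add_smul_one hA]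
      exact (cfc_pow _ 2 A (continuousOn_spectrum A _) hA).symm
    have h_cancel : (spectrum ℝ A).EqOn (fun x ↦ (x / (x + μ)) ^ 2 * (x + μ) ^ 2) (· ^ 2) := by
      rw [hA.spectrum_real_eq_range_eigenvalues]
      rintro _ ⟨i, rfl⟩
      simp only [← mul_pow, div_mul_cancel₀ _ (hμ i)]
    rw [h_sq, ← cfc_mul _ _ A (continuousOn_spectrum A _) (continuousOn_spectrum A _),
      cfc_congr h_cancel]
    exact cfc_pow_id A 2 hA
  rw [← h_mul, mul_nonsing_inv_cancel_right _ _ h_unit]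

lemma re_trace_sq_mul_inv_add_smul_one_sq (hA : A.IsHermitian) {μ : ℝ}
    (hμ : ∀ i, hA.eigenvalues i + μ ≠ 0) :
    RCLike.re (A ^ 2 * ((A + (μ : 𝕜) • 1) ^ 2)⁻¹).trace
      = ∑ i, (hA.eigenvalues i / (hA.eigenvalues i + μ)) ^ 2 := by
  rw [sq_mul_inv_add_smul_one_sq_eq_cfc hA hμ, trace_cfc hA, RCLike.ofReal_re]

-- Zero eigenvalues contribute nothing to the sum in `hsum`, even for `μ₀ = 0`, since `0 / 0 = 0`;
-- so it agrees with the sum over the nonzero eigenvalues.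
theorem stmt16_general {Psi : Matrix n n 𝕜} (hA : A.IsHermitian) (hPsi : Psi.PosSemidef)
    {q μ₀ μ : ℝ} (hμ₀ : ∀ i, hA.eigenvalues i ≠ 0 → 0 < hA.eigenvalues i + μ₀)
    (hsum : 1 = q⁻¹ * ∑ i, (hA.eigenvalues i / (hA.eigenvalues i + μ₀)) ^ 2)
    (hμ : μ₀ < μ) (hμne : μ ≠ 0) {lam : ℝ}
    (hlam : lam = μ * (1 - q⁻¹ * RCLike.re (A * (A + (μ : 𝕜) • 1)⁻¹).trace)) {μ' : ℝ}
    (hμ' : μ' = (q⁻¹ * (μ ^ 3 *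
          RCLike.re ((A + (μ : 𝕜) • 1)⁻¹ * Psi * (A + (μ : 𝕜) • 1)⁻¹).trace))
        / (lam + q⁻¹ * (μ ^ 2 * RCLike.re (A * ((A + (μ : 𝕜) • 1) ^ 2)⁻¹).trace))) :
    (lam + q⁻¹ * (μ ^ 2 * RCLike.re (A * ((A + (μ : 𝕜) • 1) ^ 2)⁻¹).trace)
        = μ * (1 - q⁻¹ * RCLike.re (A ^ 2 * ((A + (μ : 𝕜) • 1) ^ 2)⁻¹).trace))
    ∧ (lam + q⁻¹ * (μ ^ 2 * RCLike.re (A * ((A + (μ : 𝕜) • 1) ^ 2)⁻¹).trace) ≠ 0)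
    ∧ μ' = (q⁻¹ * (μ ^ 2 *
          RCLike.re ((A + (μ : 𝕜) • 1)⁻¹ * Psi * (A + (μ : 𝕜) • 1)⁻¹).trace))
        * (1 - q⁻¹ * RCLike.re (A ^ 2 * ((A + (μ : 𝕜) • 1) ^ 2)⁻¹).trace)⁻¹
    ∧ 0 ≤ μ' := by
  have h_shift (i : n) : hA.eigenvalues i + μ ≠ 0 := by
    rcases eq_or_ne (hA.eigenvalues i) 0 with hi | hi
    · rwa [hi, zero_add]
    · linarith [hμ₀ i hi]
  have h_unit : IsUnit (A + (μ : 𝕜) • 1) := isUnit_add_smul_one hA h_shift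
  have h_herm : (A + (μ : 𝕜) • 1).IsHermitian :=
    hA.add (isHermitian_one.smul (RCLike.conj_ofReal μ))
  have h_pos : 0 < 1 - q⁻¹ * RCLike.re (A ^ 2 * ((A + (μ : 𝕜) • 1) ^ 2)⁻¹).trace := by
    rw [re_trace_sq_mul_inv_add_smul_one_sq hA h_shift]
    exact one_sub_mul_sum_sq_div_add_pos hμ₀ hsum hμ
  have h_den := hlam ▸ mul_one_sub_trace_add_sq_mul_trace (c := q⁻¹) h_unit
  have h_factor : μ' = (q⁻¹ * (μ ^ 2 *
        RCLike.re ((A + (μ : 𝕜) • 1)⁻¹ * Psi * (A + (μ : 𝕜) • 1)⁻¹).trace))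
      * (1 - q⁻¹ * RCLike.re (A ^ 2 * ((A + (μ : 𝕜) • 1) ^ 2)⁻¹).trace)⁻¹ := by
    rw [hμ', h_den, pow_succ' μ 2, mul_assoc μ, mul_left_comm q⁻¹, mul_div_mul_left _ _ hμne,
      div_eq_mul_inv]
  refine ⟨h_den, h_den ▸ mul_ne_zero hμne h_pos.ne', h_factor, ?_⟩
  have hq_pos : 0 < q⁻¹ := pos_of_one_eq_mul_sum_sq hsum
  have h_trace := (RCLike.nonneg_iff.mp (trace_inv_mul_mul_inv_nonneg h_herm hPsi)).1
  rw [h_factor]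
  positivity

end RCLike

lemma lminp_le {p : ℕ} {A : Matrix (Fin p) (Fin p) ℂ} (hA : A.IsHermitian) {i : Fin p}
    (hi : 0 < hA.eigenvalues i) : lminp hA ≤ hA.eigenvalues i :=
  csInf_le ⟨0, fun _ hx ↦ hx.1.le⟩ ⟨hi, i, rfl⟩

lemma eigenvalues_add_pos_of_neg_lminp_lt {p : ℕ} {A : Matrix (Fin p) (Fin p) ℂ}
    (hA : A.PosSemidef) {s : ℝ} (hs : -lminp hA.1 < s) (i : Fin p)
    (hi : hA.1.eigenvalues i ≠ 0) : 0 < hA.1.eigenvalues i + s := by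
  linarith [lminp_le hA.1 ((hA.eigenvalues_nonneg i).lt_of_ne' hi)]

lemma specSum2_eq_sum {p : ℕ} {e : Fin p → ℝ} (he : 0 ≤ e) (μ : ℝ) :
    specSum2 e μ = ∑ i, (e i / (e i + μ)) ^ 2 := by
  refine Finset.sum_congr rfl fun i _ ↦ ?_
  split_ifs with hi
  · rw [div_pow]
  · simp [le_antisymm (not_lt.mp hi) (he i)]

/-- Alternative form of the inflation factor `μ'` (Remark 5.6): the denominator of `μ'`
equals `μ (1 - (1/q) tr[A² (A + μ I)⁻²]) ≠ 0`, and
`μ' = (1/q) tr[μ² (A + μ I)⁻¹ Ψ (A + μ I)⁻¹] ⬝ (1 - (1/q) tr[A² (A + μ I)⁻²])⁻¹ ≥ 0`. -/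
theorem stmt16 {p : ℕ} (A Psi : Matrix (Fin p) (Fin p) ℂ)
    (hA : A.PosSemidef) (hPsi : Psi.PosSemidef) (hA0 : A ≠ 0)
    (q : ℕ) (hq : 1 ≤ q) (μ₀ μ : ℝ)
    (hμ₀ : -(lminp hA.1) < μ₀ ∧ 1 = (q : ℝ)⁻¹ * specSum2 hA.1.eigenvalues μ₀)
    (hμ : μ₀ < μ) (hμne : μ ≠ 0)
    (lam : ℝ)
    (hlam : lam = μ * (1 - (q : ℝ)⁻¹ * (Matrix.trace (A * (A + (μ : ℂ) • 1)⁻¹)).re))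
    (μ' : ℝ)
    (hμ' : μ' = ((q : ℝ)⁻¹ * (μ ^ 3 *
          (Matrix.trace ((A + (μ : ℂ) • 1)⁻¹ * Psi * (A + (μ : ℂ) • 1)⁻¹)).re))
        / (lam + (q : ℝ)⁻¹ * (μ ^ 2 *
          (Matrix.trace (A * ((A + (μ : ℂ) • 1) ^ 2)⁻¹)).re))) :
    (lam + (q : ℝ)⁻¹ * (μ ^ 2 * (Matrix.trace (A * ((A + (μ : ℂ) • 1) ^ 2)⁻¹)).re)
        = μ * (1 - (q : ℝ)⁻¹ * (Matrix.trace (A ^ 2 * ((A + (μ : ℂ) • 1) ^ 2)⁻¹)).re))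
    ∧ (lam + (q : ℝ)⁻¹ * (μ ^ 2 * (Matrix.trace (A * ((A + (μ : ℂ) • 1) ^ 2)⁻¹)).re) ≠ 0)
    ∧ μ' = ((q : ℝ)⁻¹ * (μ ^ 2 *
          (Matrix.trace ((A + (μ : ℂ) • 1)⁻¹ * Psi * (A + (μ : ℂ) • 1)⁻¹)).re))
        * (1 - (q : ℝ)⁻¹ * (Matrix.trace (A ^ 2 * ((A + (μ : ℂ) • 1) ^ 2)⁻¹)).re)⁻¹
    ∧ 0 ≤ μ' := by
  refine stmt16_general hA.1 hPsi (eigenvalues_add_pos_of_neg_lminp_lt hA hμ₀.1) ?_ hμ hμne hlam hμ'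
  rw [← specSum2_eq_sum hA.eigenvalues_nonneg, ← hμ₀.2]
end
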